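/- Let η ∈ ℂ with 2η ∉ Λ. Then the Sklyanin algebra 𝒮_η and the quotient algebra Q_η = T(V)/[R_η] are isomorphic as unital ℂ-algebras. -/

import Mathlib

open Complex

noncomputable section

/-- The Jacobi theta function `θ₁(z|τ)`. -/
def θ (τ z : ℂ) : ℂ :=
  I * ∑' n : ℤ, (-1 : ℂ) ^ n * Complex.exp (Real.pi * I * τ * ((n : ℂ) - 1/2) ^ 2) *
    Complex.exp (Real.pi * I * (2 * (n : ℂ) - 1) * z)

/-- `θ₂(z) = θ(z+1/2)`. -/
def θ2 (τ z : ℂ) : ℂ := θ τ (z + 1/2)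

/-- `θ₃(z) = q^{1/4}exp(iπz)θ(z+(1+τ)/2)`. -/
def θ3 (τ z : ℂ) : ℂ :=
  Complex.exp (Real.pi * I * τ / 4) * Complex.exp (Real.pi * I * z) * θ τ (z + (1 + τ)/2)

/-- `θ₄(z) = θ₃(z+1/2)`. -/
def θ4 (τ z : ℂ) : ℂ := θ3 τ (z + 1/2)

/-- The structure constant `J₂₃`. -/
def J23 (τ η : ℂ) : ℂ := (θ τ η * θ2 τ η / (θ3 τ η * θ4 τ η)) ^ 2

/-- The structure constant `J₃₁`. -/
def J31 (τ η : ℂ) : ℂ := -(θ τ η * θ3 τ η / (θ2 τ η * θ4 τ η)) ^ 2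

/-- The structure constant `J₁₂`. -/
def J12 (τ η : ℂ) : ℂ := (θ τ η * θ4 τ η / (θ2 τ η * θ3 τ η)) ^ 2

/-- The generators `S₀,S₁,S₂,S₃` of the free algebra. -/
def X : Fin 4 → FreeAlgebra ℂ (Fin 4) := FreeAlgebra.ι ℂ

/-- The six Sklyanin relations. -/
def sklRel (τ η : ℂ) (x y : FreeAlgebra ℂ (Fin 4)) : Prop :=
  (x = X 0 * X 1 - X 1 * X 0 ∧ y = (I * J23 τ η) • (X 2 * X 3 + X 3 * X 2)) ∨
  (x = X 0 * X 2 - X 2 * X 0 ∧ y = (I * J31 τ η) • (X 3 * X 1 + X 1 * X 3)) ∨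
  (x = X 0 * X 3 - X 3 * X 0 ∧ y = (I * J12 τ η) • (X 1 * X 2 + X 2 * X 1)) ∨
  (x = X 1 * X 2 - X 2 * X 1 ∧ y = (I : ℂ) • (X 0 * X 3 + X 3 * X 0)) ∨
  (x = X 2 * X 3 - X 3 * X 2 ∧ y = (I : ℂ) • (X 0 * X 1 + X 1 * X 0)) ∨
  (x = X 3 * X 1 - X 1 * X 3 ∧ y = (I : ℂ) • (X 0 * X 2 + X 2 * X 0))

/-- The Sklyanin algebra `𝒮_η`. -/
def Sklyanin (τ η : ℂ) : Type := RingQuot (sklRel τ η)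

instance (τ η : ℂ) : Ring (Sklyanin τ η) := by unfold Sklyanin; infer_instance
instance (τ η : ℂ) : Algebra ℂ (Sklyanin τ η) := by unfold Sklyanin; infer_instance

/-- The space `V` of order-4 theta functions `z ↦ c·∏θ(z+aᵢ)`, `∑aᵢ = 0`. -/
def Vset (τ : ℂ) : Set (ℂ → ℂ) :=
  {g | ∃ (c : ℂ) (a : Fin 4 → ℂ), (∑ i, a i) = 0 ∧
    g = fun z => c * ∏ i, θ τ (z + a i)}

/-- `V` as a submodule of `ℂ → ℂ`. -/
def Vsub (τ : ℂ) : Submodule ℂ (ℂ → ℂ) := Submodule.span ℂ (Vset τ)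

/-- `f(α,β,γ;z) = θ(z+α)θ(z+β)θ(z+γ)θ(z−α−β−γ)`. -/
def fV (τ α β γ : ℂ) : ℂ → ℂ :=
  fun z => θ τ (z + α) * θ τ (z + β) * θ τ (z + γ) * θ τ (z - α - β - γ)

lemma fVmem (τ α β γ : ℂ) : fV τ α β γ ∈ Vsub τ := by
  apply Submodule.subset_span
  refine ⟨1, ![α, β, γ, -α - β - γ], ?_, ?_⟩
  · simp [Fin.sum_univ_four]
  · funext z
    simp only [Fin.prod_univ_four, Matrix.cons_val_zero, Matrix.cons_val_one,
      Matrix.head_cons, Matrix.cons_val_two, Matrix.tail_cons, Matrix.cons_val_three,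
      one_mul]
    have hz : z + (-α - β - γ) = z - α - β - γ := by ring
    rw [hz]
    rfl

/-- `f(α,β,γ;·)` as an element of `V`. -/
def elemV (τ α β γ : ℂ) : ↥(Vsub τ) := ⟨fV τ α β γ, fVmem τ α β γ⟩

/-- The relations generating the two-sided ideal `[R_η]` in the tensor algebra `T(V)`:
the quadratic elements `F_η(a,b,c₁,c₂)` are set to zero. -/
def qRel (τ η : ℂ) (x y : TensorAlgebra ℂ ↥(Vsub τ)) : Prop :=
  ∃ a b c₁ c₂ : ℂ, y = 0 ∧ x =
    TensorAlgebra.ι ℂ (elemV τ (a - η/2) (b - η/2) (c₁ + η/2)) *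
      TensorAlgebra.ι ℂ (elemV τ (a + η/2) (b + η/2) (c₂ - η/2)) -
    TensorAlgebra.ι ℂ (elemV τ (a - η/2) (b - η/2) (c₂ + η/2)) *
      TensorAlgebra.ι ℂ (elemV τ (a + η/2) (b + η/2) (c₁ - η/2))

/-- The quotient algebra `Q_η = T(V)/[R_η]`. -/
def Qeta (τ η : ℂ) : Type := RingQuot (qRel τ η)

instance (τ η : ℂ) : Ring (Qeta τ η) := by unfold Qeta; infer_instance
instance (τ η : ℂ) : Algebra ℂ (Qeta τ η) := by unfold Qeta; infer_instance

/-!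
Riemann's quartic relation expands `f(α,β,γ;z)` in the functions `z ↦ θⱼ(2z)` with coefficients
`±θⱼ(α+β)θⱼ(α+γ)θⱼ(β+γ)/2`, so these four functions form a basis of `V`. In this basis the
coefficients of `F_η` that belong to a splitting of the four theta functions into two pairs are
governed by the addition formulas for products such as `θ₁(s-η)θ₂(s+η)`, and linear independence of
the theta functions turns the vanishing of all `F_η` into three pairs of relations of the form
`[x,y] = -r(zw + wz)`, `[z,w] = r(xy + yx)`, one pair for each splitting. Rescaling the basis by
`θ₁(η)`, `θ₂(η)`, `iθ₃(η)`, `θ₄(η)` transforms them into the relations of the Sklyanin algebra.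

The scalars involved are nonzero because `θ` vanishes exactly on `Λ`. For `Im τ ≥ 2` the first term
of the sine series of `θ` dominates the others on a strip `|Im z| ≤ Im τ / 2`, and in general the
identity `θ(z|τ)θ₂(z|τ) = θ(2z|2τ)θ₄(0|2τ)` allows one to double `τ`.
-/

section ThetaFunctions

open scoped Real

/-! ### Jacobi theta functions -/

section Basic

variable (τ z : ℂ)

lemma theta_term_eq_jacobiTheta₂_term (n : ℤ) :
    (-1 : ℂ) ^ n * Complex.exp (π * I * τ * ((n : ℂ) - 1 / 2) ^ 2) *
        Complex.exp (π * I * (2 * (n : ℂ) - 1) * z) =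
      Complex.exp (π * I * τ / 4 - π * I * z) *
        jacobiTheta₂_term n (z + 1 / 2 - τ / 2) τ := by
  have neg_one_zpow : (-1 : ℂ) ^ n = Complex.exp (π * I * n) := by
    rw [mul_comm, Complex.exp_int_mul, Complex.exp_pi_mul_I]
  simp only [neg_one_zpow, jacobiTheta₂_term, ← Complex.exp_add]
  congr 1
  ring

lemma theta_eq_jacobiTheta₂ : θ τ z =
    I * (Complex.exp (π * I * τ / 4 - π * I * z) * jacobiTheta₂ (z + 1 / 2 - τ / 2) τ) := by
  simp only [θ, theta_term_eq_jacobiTheta₂_term, tsum_mul_left, jacobiTheta₂]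

lemma theta3_eq_jacobiTheta₂ : θ3 τ z = jacobiTheta₂ z τ := by
  have exp_factor : Complex.exp (π * I * τ / 4 - π * I * (z + (1 + τ) / 2)) =
      -I * (Complex.exp (π * I * τ / 4) * Complex.exp (π * I * z))⁻¹ := by
    rw [← Complex.exp_add, ← Complex.exp_neg, ← Complex.exp_neg_pi_div_two_mul_I,
      ← Complex.exp_add]
    congr 1
    ring
  rw [θ3, theta_eq_jacobiTheta₂, exp_factor,
    show z + (1 + τ) / 2 + 1 / 2 - τ / 2 = z + 1 by ring, jacobiTheta₂_add_left]
  field_simp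
  linear_combination -jacobiTheta₂ z τ * I_sq

lemma theta_add_half : θ τ (z + 1 / 2) = θ2 τ z := rfl

lemma theta3_add_half : θ3 τ (z + 1 / 2) = θ4 τ z := rfl

lemma theta3_add_one : θ3 τ (z + 1) = θ3 τ z := by
  simp only [theta3_eq_jacobiTheta₂, jacobiTheta₂_add_left]

lemma theta4_add_half : θ4 τ (z + 1 / 2) = θ3 τ z := by
  rw [θ4, add_assoc, add_halves, theta3_add_one]

/-- The factor of automorphy `q^{-1/4}exp(-iπz)` of the theta functions under `z ↦ z + τ/2`. -/
def halfPeriodFactor : ℂ := Complex.exp (-(π * I * τ / 4) - π * I * z)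

lemma halfPeriodFactor_ne_zero : halfPeriodFactor τ z ≠ 0 := Complex.exp_ne_zero _

lemma halfPeriodFactor_mul (w : ℂ) :
    halfPeriodFactor τ z * halfPeriodFactor τ w =
      halfPeriodFactor τ 0 * halfPeriodFactor τ (z + w) := by
  simp only [halfPeriodFactor, ← Complex.exp_add]
  congr 1
  ring

lemma theta2_add_half_period : θ2 τ (z + τ / 2) = halfPeriodFactor τ z * θ3 τ z := by
  have factor_inv : halfPeriodFactor τ z =
      (Complex.exp (π * I * τ / 4) * Complex.exp (π * I * z))⁻¹ := by
    rw [halfPeriodFactor, ← Complex.exp_add, ← Complex.exp_neg]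
    congr 1
    ring
  rw [θ2, θ3, factor_inv, show z + τ / 2 + 1 / 2 = z + (1 + τ) / 2 by ring]
  field_simp

lemma theta3_neg : θ3 τ (-z) = θ3 τ z := by
  rw [theta3_eq_jacobiTheta₂, theta3_eq_jacobiTheta₂, jacobiTheta₂_neg_left]

lemma theta4_neg : θ4 τ (-z) = θ4 τ z := by
  rw [θ4, show -z + 1 / 2 = -(z - 1 / 2) by ring, theta3_neg, ← theta4_add_half, sub_add_cancel]

lemma theta3_add_half_period : θ3 τ (z + τ / 2) = halfPeriodFactor τ z * θ2 τ z := by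
  have quasiperiod := jacobiTheta₂_add_left' (z - τ / 2) τ
  have factor_eq : halfPeriodFactor τ z * halfPeriodFactor τ (z - τ / 2) =
      Complex.exp (-π * I * (τ + 2 * (z - τ / 2))) := by
    rw [halfPeriodFactor, halfPeriodFactor, ← Complex.exp_add]
    congr 1
    ring
  rw [show z - τ / 2 + τ = z + τ / 2 by ring, ← factor_eq, ← theta3_eq_jacobiTheta₂,
    ← theta3_eq_jacobiTheta₂] at quasiperiod
  rw [quasiperiod, mul_assoc, ← theta2_add_half_period, sub_add_cancel]

lemma theta2_neg : θ2 τ (-z) = θ2 τ z := by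
  have theta2_shift := theta2_add_half_period τ (-z - τ / 2)
  have factor_mul : halfPeriodFactor τ (-z - τ / 2) * halfPeriodFactor τ z = 1 := by
    rw [halfPeriodFactor, halfPeriodFactor, ← Complex.exp_add, Complex.exp_eq_one_iff]
    exact ⟨0, by push_cast; ring⟩
  have theta3_shift : θ3 τ (-z - τ / 2) = halfPeriodFactor τ z * θ2 τ z := by
    rw [← theta3_add_half_period, ← theta3_neg, neg_sub, sub_neg_eq_add, add_comm]
  rw [sub_add_cancel] at theta2_shift
  rw [theta2_shift, theta3_shift, ← mul_assoc, factor_mul, one_mul]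

lemma halfPeriodFactor_add_half :
    halfPeriodFactor τ (z + 1 / 2) = -I * halfPeriodFactor τ z := by
  rw [halfPeriodFactor, halfPeriodFactor, ← Complex.exp_neg_pi_div_two_mul_I, ← Complex.exp_add]
  congr 1
  ring

lemma theta_add_half_period : θ τ (z + τ / 2) = I * halfPeriodFactor τ z * θ4 τ z := by
  have theta2_shift := theta2_add_half_period τ (z - 1 / 2)
  have factor_eq := halfPeriodFactor_add_half τ (z - 1 / 2)
  rw [sub_add_cancel] at factor_eq
  rw [θ2, show z - 1 / 2 + τ / 2 + 1 / 2 = z + τ / 2 by ring, ← theta4_add_half,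
    sub_add_cancel] at theta2_shift
  linear_combination theta2_shift - I * θ4 τ z * factor_eq +
    halfPeriodFactor τ (z - 1 / 2) * θ4 τ z * I_sq

lemma theta2_add_half : θ2 τ (z + 1 / 2) = -θ τ z := by
  have theta2_shift := theta2_add_half_period τ (z - τ / 2 + 1 / 2)
  have theta_shift := theta_add_half_period τ (z - τ / 2)
  rw [halfPeriodFactor_add_half, theta3_add_half,
    show z - τ / 2 + 1 / 2 + τ / 2 = z + 1 / 2 by ring] at theta2_shift
  rw [sub_add_cancel] at theta_shift
  linear_combination theta2_shift + theta_shift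

lemma theta4_add_half_period : θ4 τ (z + τ / 2) = I * halfPeriodFactor τ z * θ τ z := by
  rw [θ4, add_right_comm, theta3_add_half_period, theta2_add_half, halfPeriodFactor_add_half]
  ring

lemma theta_neg : θ τ (-z) = -θ τ z := by
  rw [← theta2_add_half, ← theta2_neg, θ2]
  congr 1
  ring

lemma theta_zero : θ τ 0 = 0 := by
  simpa only [neg_zero, self_eq_neg] using theta_neg τ 0

lemma theta_add_one : θ τ (z + 1) = -θ τ z := by
  rw [← theta2_add_half, θ2, add_assoc, add_halves]

lemma theta2_add_one : θ2 τ (z + 1) = -θ2 τ z := by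
  rw [θ2, add_right_comm, theta_add_one, θ2]

lemma theta_add_tau :
    θ τ (z + τ) = -(halfPeriodFactor τ z * halfPeriodFactor τ (z + τ / 2)) * θ τ z := by
  rw [← add_halves τ, ← add_assoc, add_halves, theta_add_half_period, theta4_add_half_period]
  linear_combination halfPeriodFactor τ (z + τ / 2) * halfPeriodFactor τ z * θ τ z * I_sq

end Basic

section Products

lemma hasSum_prod_mul {𝕜 ι κ : Type*} [RCLike 𝕜] {f : ι → 𝕜} {g : κ → 𝕜} {a b : 𝕜} (hf : HasSum f a)
    (hg : HasSum g b) : HasSum (fun p : ι × κ => f p.1 * g p.2) (a * b) :=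
  hf.mul hg (summable_mul_of_summable_norm hf.summable.norm hg.summable.norm)

lemma bijective_int_prod_parity : Function.Bijective (Sum.elim
    (fun p : ℤ × ℤ => (p.1 + p.2, p.1 - p.2)) fun p : ℤ × ℤ => (p.1 + p.2 - 1, p.1 - p.2)) := by
  constructor
  · rintro (⟨k, l⟩ | ⟨k, l⟩) (⟨k', l'⟩ | ⟨k', l'⟩) h <;>
      simp only [Sum.elim_inl, Sum.elim_inr, Prod.mk.injEq, Sum.inl.injEq, Sum.inr.injEq,
        reduceCtorEq] at h ⊢ <;> omega
  · rintro ⟨m, n⟩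
    obtain ⟨k, hk⟩ | ⟨k, hk⟩ := Int.even_or_odd (m + n)
    · exact ⟨Sum.inl (k, k - n), by simp only [Sum.elim_inl, Prod.mk.injEq]; omega⟩
    · exact ⟨Sum.inr (k + 1, k + 1 - n), by simp only [Sum.elim_inr, Prod.mk.injEq]; omega⟩

lemma hasSum_int_prod_of_parity {M : Type*} [AddCommMonoid M] [TopologicalSpace M]
    [ContinuousAdd M] {f : ℤ × ℤ → M} {a b : M}
    (heven : HasSum (fun p : ℤ × ℤ => f (p.1 + p.2, p.1 - p.2)) a)
    (hodd : HasSum (fun p : ℤ × ℤ => f (p.1 + p.2 - 1, p.1 - p.2)) b) : HasSum f (a + b) :=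
  (Equiv.ofBijective _ bijective_int_prod_parity).hasSum_iff.mp (heven.sum hodd)

variable {τ : ℂ} (hτ : 0 < τ.im)
include hτ

lemma hasSum_theta (z : ℂ) : HasSum (fun n : ℤ => I * ((-1 : ℂ) ^ n *
    Complex.exp (π * I * τ * ((n : ℂ) - 1 / 2) ^ 2) *
      Complex.exp (π * I * (2 * (n : ℂ) - 1) * z))) (θ τ z) := by
  simp only [theta_term_eq_jacobiTheta₂_term, theta_eq_jacobiTheta₂]
  exact ((hasSum_jacobiTheta₂_term _ hτ).mul_left _).mul_left _

lemma hasSum_theta3 (z : ℂ) :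
    HasSum (fun n : ℤ => Complex.exp (π * I * τ * n ^ 2 + 2 * π * I * n * z)) (θ3 τ z) := by
  rw [theta3_eq_jacobiTheta₂]
  refine (hasSum_jacobiTheta₂_term z hτ).congr_fun fun n => ?_
  rw [jacobiTheta₂_term]
  ring_nf

lemma hasSum_theta2 (z : ℂ) : HasSum (fun n : ℤ =>
    Complex.exp (π * I * τ * (n - 1 / 2) ^ 2 + π * I * (2 * n - 1) * z)) (θ2 τ z) := by
  rw [← sub_add_cancel z (τ / 2), theta2_add_half_period]
  refine ((hasSum_theta3 hτ _).mul_left _).congr_fun fun n => ?_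
  rw [halfPeriodFactor, ← Complex.exp_add]
  congr 1
  ring

lemma theta3_add_mul_theta3_sub (u h : ℂ) : θ3 τ (u + h) * θ3 τ (u - h) =
    θ3 (2 * τ) (2 * u) * θ3 (2 * τ) (2 * h) + θ2 (2 * τ) (2 * u) * θ2 (2 * τ) (2 * h) := by
  have h2τ : 0 < (2 * τ).im := by simpa using hτ
  refine (hasSum_prod_mul (hasSum_theta3 hτ _) (hasSum_theta3 hτ _)).unique
    (hasSum_int_prod_of_parity ?_ ?_)
  · refine (hasSum_prod_mul (hasSum_theta3 h2τ _) (hasSum_theta3 h2τ _)).congr_fun fun p => ?_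
    simp only [← Complex.exp_add]
    congr 1
    push_cast
    ring
  · refine (hasSum_prod_mul (hasSum_theta2 h2τ _) (hasSum_theta2 h2τ _)).congr_fun fun p => ?_
    simp only [← Complex.exp_add]
    congr 1
    push_cast
    ring

lemma theta2_add_mul_theta2_sub (u h : ℂ) : θ2 τ (u + h) * θ2 τ (u - h) =
    θ3 (2 * τ) (2 * u) * θ2 (2 * τ) (2 * h) + θ2 (2 * τ) (2 * u) * θ3 (2 * τ) (2 * h) := by
  obtain ⟨v, rfl⟩ : ∃ v, u = v + τ / 2 := ⟨u - τ / 2, (sub_add_cancel _ _).symm⟩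
  have factor_eq : halfPeriodFactor τ (v + h) * halfPeriodFactor τ (v - h) =
      halfPeriodFactor (2 * τ) (2 * v) := by
    simp only [halfPeriodFactor, ← Complex.exp_add]
    congr 1
    ring
  rw [add_right_comm, add_sub_right_comm, theta2_add_half_period, theta2_add_half_period,
    show 2 * (v + τ / 2) = 2 * v + 2 * τ / 2 by ring, theta2_add_half_period,
    theta3_add_half_period, ← factor_eq]
  linear_combination halfPeriodFactor τ (v + h) * halfPeriodFactor τ (v - h) *
    theta3_add_mul_theta3_sub hτ v h

lemma theta4_add_mul_theta4_sub (u h : ℂ) : θ4 τ (u + h) * θ4 τ (u - h) =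
    θ3 (2 * τ) (2 * u) * θ3 (2 * τ) (2 * h) - θ2 (2 * τ) (2 * u) * θ2 (2 * τ) (2 * h) := by
  rw [θ4, θ4, add_right_comm, ← add_sub_right_comm, theta3_add_mul_theta3_sub hτ,
    show 2 * (u + 1 / 2) = 2 * u + 1 by ring, theta3_add_one, theta2_add_one]
  ring

lemma theta_add_mul_theta_sub (u h : ℂ) : θ τ (u + h) * θ τ (u - h) =
    θ3 (2 * τ) (2 * u) * θ2 (2 * τ) (2 * h) - θ2 (2 * τ) (2 * u) * θ3 (2 * τ) (2 * h) := by
  rw [← neg_mul_neg, ← theta2_add_half, ← theta2_add_half, add_right_comm, ← add_sub_right_comm,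
    theta2_add_mul_theta2_sub hτ, show 2 * (u + 1 / 2) = 2 * u + 1 by ring, theta3_add_one,
    theta2_add_one]
  ring

lemma theta_three_term (a b c d : ℂ) :
    θ τ (a + b) * θ τ (a - b) * (θ τ (c + d) * θ τ (c - d)) -
      θ τ (a + c) * θ τ (a - c) * (θ τ (b + d) * θ τ (b - d)) +
      θ τ (a + d) * θ τ (a - d) * (θ τ (b + c) * θ τ (b - c)) = 0 := by
  simp only [theta_add_mul_theta_sub hτ]
  ring

lemma riemann_quartic (u h v k : ℂ) :
    2 * (θ τ (u + h) * θ τ (u - h) * (θ τ (v + k) * θ τ (v - k))) =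
      -(θ τ (u + v) * θ τ (u - v) * (θ τ (k + h) * θ τ (k - h))) -
        θ2 τ (u + v) * θ2 τ (u - v) * (θ2 τ (k + h) * θ2 τ (k - h)) +
        θ3 τ (u + v) * θ3 τ (u - v) * (θ3 τ (k + h) * θ3 τ (k - h)) -
        θ4 τ (u + v) * θ4 τ (u - v) * (θ4 τ (k + h) * θ4 τ (k - h)) := by
  simp only [theta_add_mul_theta_sub hτ, theta2_add_mul_theta2_sub hτ,
    theta3_add_mul_theta3_sub hτ, theta4_add_mul_theta4_sub hτ]
  ring

end Products

section Lattice

/-- The period lattice `Λ = ℤ + τℤ`. -/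
def periodLattice (τ : ℂ) : AddSubgroup ℂ := AddSubgroup.closure {1, τ}

/-- The half-periods `0, 1/2, (1+τ)/2, τ/2`, the `j`-th one carrying `θ` to a multiple of the
`j`-th theta function. -/
def halfPeriod (τ : ℂ) (j : Fin 4) : ℂ :=
  ((![0, 1, 1, 0] j : ℤ) + (![0, 0, 1, 1] j : ℤ) * τ) / 2

/-- The four Jacobi theta functions `θ₁, θ₂, θ₃, θ₄`, indexed by `Fin 4`. -/
def thetaFamily (τ : ℂ) : Fin 4 → ℂ → ℂ := ![θ τ, θ2 τ, θ3 τ, θ4 τ]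

lemma mem_periodLattice {τ z : ℂ} : z ∈ periodLattice τ ↔ ∃ m n : ℤ, z = m + τ * n := by
  simp only [periodLattice, AddSubgroup.mem_closure_pair, zsmul_eq_mul, mul_one, mul_comm τ,
    eq_comm]

lemma theta_add_eq_zero_iff {τ w : ℂ} (hw : w ∈ periodLattice τ) (z : ℂ) :
    θ τ (z + w) = 0 ↔ θ τ z = 0 := by
  induction hw using AddSubgroup.closure_induction generalizing z with
  | mem w hw =>
    rcases hw with rfl | rfl
    · rw [theta_add_one, neg_eq_zero]
    · simp only [theta_add_tau, mul_eq_zero, neg_eq_zero, halfPeriodFactor_ne_zero, false_or]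
  | zero => rw [add_zero]
  | add v w _ _ hv hw => rw [← add_assoc, hw, hv]
  | neg w _ hw => rw [← hw, neg_add_cancel_right]

lemma theta_eq_zero_of_mem {τ w : ℂ} (hw : w ∈ periodLattice τ) : θ τ w = 0 := by
  rw [← zero_add w, theta_add_eq_zero_iff hw, theta_zero]

lemma thetaFamily_eq_zero_iff_theta (τ : ℂ) (j : Fin 4) (z : ℂ) :
    thetaFamily τ j z = 0 ↔ θ τ (z + halfPeriod τ j) = 0 := by
  have factor_ne := halfPeriodFactor_ne_zero τ z
  fin_cases j
  · simp [thetaFamily, halfPeriod]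
  · simp [thetaFamily, halfPeriod, θ2]
  · have theta_add : θ τ (z + halfPeriod τ 2) = halfPeriodFactor τ z * θ3 τ z := by
      rw [← theta2_add_half_period, θ2]
      congr 1
      simp only [halfPeriod, Matrix.cons_val]
      push_cast
      ring
    simp [theta_add, factor_ne, thetaFamily]
  · have theta_add : θ τ (z + halfPeriod τ 3) = I * halfPeriodFactor τ z * θ4 τ z := by
      simp [← theta_add_half_period, halfPeriod]
    simp [theta_add, factor_ne, thetaFamily]

lemma half_mem_periodLattice_iff {τ : ℂ} (hτ : τ.im ≠ 0) (a b : ℤ) :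
    (a + b * τ) / 2 ∈ periodLattice τ ↔ Even a ∧ Even b := by
  rw [mem_periodLattice]
  constructor
  · rintro ⟨m, n, h⟩
    have hb : b = n + n := by
      have im_eq : b * τ.im / 2 = τ.im * n := by simpa using congrArg Complex.im h
      have b_eq : (b : ℝ) = n + n := mul_right_cancel₀ hτ (by linear_combination 2 * im_eq)
      exact_mod_cast b_eq
    have ha : (a : ℂ) = ((m + m : ℤ) : ℂ) := by
      rw [hb] at h
      push_cast at h ⊢
      linear_combination 2 * h
    exact ⟨⟨m, by exact_mod_cast ha⟩, ⟨n, hb⟩⟩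
  · rintro ⟨⟨m, rfl⟩, ⟨n, rfl⟩⟩
    exact ⟨m, n, by push_cast; ring⟩

lemma halfPeriod_add_mem_periodLattice_iff {τ : ℂ} (hτ : τ.im ≠ 0) (i j : Fin 4) :
    halfPeriod τ i + halfPeriod τ j ∈ periodLattice τ ↔ i = j := by
  have parity : ∀ i j : Fin 4, Even (![0, 1, 1, 0] i + ![0, 1, 1, 0] j : ℤ) ∧
      Even (![0, 0, 1, 1] i + ![0, 0, 1, 1] j : ℤ) ↔ i = j := by decide
  rw [← parity, ← half_mem_periodLattice_iff hτ, halfPeriod, halfPeriod]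
  push_cast
  ring_nf

end Lattice

/-! ### Zeros of the theta functions -/

section Zeros

variable {τ : ℂ}

lemma hasSum_theta_sin (hτ : 0 < τ.im) (z : ℂ) : HasSum (fun m : ℕ => 2 * (-1 : ℂ) ^ m *
    Complex.exp (π * I * τ * (m + 1 / 2) ^ 2) * Complex.sin ((2 * m + 1) * (π * z)))
    (θ τ z) := by
  refine ((Equiv.addRight (1 : ℤ)).hasSum_iff.mpr
    (hasSum_theta hτ z)).nat_add_neg_add_one.congr_fun fun m => ?_
  have neg_one_zpow : (-1 : ℂ) ^ ((m : ℤ) + 1) = -(-1) ^ m := by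
    rw [zpow_add_one₀ (by norm_num), zpow_natCast]
    ring
  have neg_one_zpow_neg : (-1 : ℂ) ^ (-(m : ℤ)) = (-1) ^ m := by
    rw [zpow_neg, zpow_natCast, ← inv_pow]
    norm_num
  simp only [Function.comp_apply, Equiv.coe_addRight, neg_add_rev, neg_add_cancel_comm,
    neg_one_zpow, neg_one_zpow_neg, Complex.sin]
  push_cast
  ring_nf

lemma norm_cos_le (w : ℂ) : ‖Complex.cos w‖ ≤ Real.exp |w.im| := by
  have two_mul_le : ‖2 * Complex.cos w‖ ≤ Real.exp |w.im| + Real.exp |w.im| := by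
    rw [Complex.two_cos]
    refine (norm_add_le _ _).trans (add_le_add ?_ ?_) <;>
      simp only [Complex.norm_exp, Real.exp_le_exp] <;> simp [neg_le_abs, le_abs_self]
  rw [norm_mul, Complex.norm_two] at two_mul_le
  linarith

lemma norm_sin_odd_mul_le (m : ℕ) (w : ℂ) : ‖Complex.sin ((2 * m + 1) * w)‖ ≤
    (2 * m + 1) * Real.exp (2 * m * |w.im|) * ‖Complex.sin w‖ := by
  induction m with
  | zero => simp
  | succ m ih =>
    have sin_step : Complex.sin ((2 * ((m + 1 : ℕ) : ℂ) + 1) * w) =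
        Complex.sin ((2 * m + 1) * w) +
          2 * Complex.cos ((2 * (m + 1)) * w) * Complex.sin w := by
      rw [← sub_eq_iff_eq_add', Complex.sin_sub_sin]
      push_cast
      ring_nf
    have cos_le : ‖Complex.cos ((2 * (m + 1)) * w)‖ ≤ Real.exp (2 * (m + 1) * |w.im|) := by
      refine (norm_cos_le _).trans_eq ?_
      rw [show (2 * (m + 1) * w : ℂ) = ((2 * (m + 1) : ℝ) : ℂ) * w by push_cast; rfl,
        Complex.im_ofReal_mul, abs_mul, abs_of_nonneg (by positivity)]
    have exp_le : Real.exp (2 * m * |w.im|) ≤ Real.exp (2 * (m + 1) * |w.im|) := by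
      gcongr
      linarith
    rw [sin_step]
    push_cast
    calc _ ≤ (2 * m + 1) * Real.exp (2 * m * |w.im|) * ‖Complex.sin w‖ +
          2 * Real.exp (2 * (m + 1) * |w.im|) * ‖Complex.sin w‖ := by
          refine (norm_add_le _ _).trans (add_le_add ih ?_)
          rw [norm_mul, norm_mul, Complex.norm_two]
          gcongr
      _ ≤ (2 * m + 1) * Real.exp (2 * (m + 1) * |w.im|) * ‖Complex.sin w‖ +
          2 * Real.exp (2 * (m + 1) * |w.im|) * ‖Complex.sin w‖ := by gcongr
      _ = _ := by ring

lemma odd_mul_exp_neg_le {t : ℝ} (ht : 2 ≤ t) (m : ℕ) :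
    (2 * m + 1) * Real.exp (-(π * t * m ^ 2)) ≤ (3 / 7 : ℝ) ^ m := by
  have odd_le : (2 * m + 1 : ℝ) ≤ 3 ^ m := by
    have bernoulli := one_add_mul_le_pow (show (-2 : ℝ) ≤ 2 by norm_num) m
    norm_num at bernoulli
    linarith
  have exp_le : Real.exp (-(2 * π)) ≤ 7⁻¹ := by
    rw [Real.exp_neg]
    gcongr
    linarith [Real.add_one_le_exp (2 * π), Real.pi_gt_three]
  have exponent_le : -(π * t * m ^ 2) ≤ m * -(2 * π) := by
    have hm : (m : ℝ) ≤ m ^ 2 := by exact_mod_cast Nat.le_self_pow two_ne_zero m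
    nlinarith [Real.pi_pos, mul_le_mul ht hm (Nat.cast_nonneg m) (by linarith)]
  calc (2 * m + 1) * Real.exp (-(π * t * m ^ 2))
      ≤ 3 ^ m * Real.exp (-(2 * π)) ^ m := by
        rw [← Real.exp_nat_mul]
        gcongr
    _ ≤ 3 ^ m * (7⁻¹) ^ m := by gcongr
    _ = (3 / 7) ^ m := by rw [← mul_pow, div_eq_mul_inv]

lemma norm_exp_pi_mul_I_mul (m : ℕ) : ‖Complex.exp (π * I * τ * (m + 1 / 2) ^ 2)‖ =
    Real.exp (-(π * τ.im * (m + 1 / 2) ^ 2)) := by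
  rw [Complex.norm_exp, show π * I * τ * (m + 1 / 2) ^ 2 =
    ((π * (m + 1 / 2) ^ 2 : ℝ) : ℂ) * (I * τ) by push_cast; ring, Complex.re_ofReal_mul,
    Complex.I_mul_re]
  ring_nf

lemma norm_theta_sin_term_le {z : ℂ} (hz : |z.im| ≤ τ.im / 2) (m : ℕ) :
    ‖2 * (-1 : ℂ) ^ m * Complex.exp (π * I * τ * (m + 1 / 2) ^ 2) *
        Complex.sin ((2 * m + 1) * (π * z))‖ ≤
      2 * Real.exp (-(π * τ.im / 4)) * ‖Complex.sin (π * z)‖ *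
        ((2 * m + 1) * Real.exp (-(π * τ.im * m ^ 2))) := by
  have sin_le := norm_sin_odd_mul_le m (π * z)
  have exponent_le : -(π * τ.im * (m + 1 / 2) ^ 2) + 2 * m * |(π * z).im| ≤
      -(π * τ.im / 4) + -(π * τ.im * m ^ 2) := by
    rw [Complex.im_ofReal_mul, abs_mul, abs_of_pos Real.pi_pos]
    nlinarith [mul_le_mul_of_nonneg_left hz (by positivity : 0 ≤ 2 * m * π)]
  rw [norm_mul, norm_mul, norm_mul, norm_pow, norm_neg, norm_one, one_pow, mul_one,
    Complex.norm_two, norm_exp_pi_mul_I_mul]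
  calc _ ≤ 2 * Real.exp (-(π * τ.im * (m + 1 / 2) ^ 2)) *
        ((2 * m + 1) * Real.exp (2 * m * |(π * z).im|) * ‖Complex.sin (π * z)‖) := by gcongr
    _ = 2 * Real.exp (-(π * τ.im * (m + 1 / 2) ^ 2) + 2 * m * |(π * z).im|) *
        (2 * m + 1) * ‖Complex.sin (π * z)‖ := by rw [Real.exp_add]; ring
    _ ≤ 2 * Real.exp (-(π * τ.im / 4) + -(π * τ.im * m ^ 2)) *
        (2 * m + 1) * ‖Complex.sin (π * z)‖ := by gcongr
    _ = _ := by rw [Real.exp_add]; ring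

lemma sin_eq_zero_of_theta_eq_zero {z : ℂ} (hτ : 2 ≤ τ.im) (hz : |z.im| ≤ τ.im / 2)
    (h : θ τ z = 0) : Complex.sin (π * z) = 0 := by
  have hasSum := hasSum_theta_sin (zero_lt_two.trans_le hτ) z
  rw [h] at hasSum
  have term_le (m : ℕ) := (norm_theta_sin_term_le hz m).trans
    (mul_le_mul_of_nonneg_left (odd_mul_exp_neg_le hτ m) (by positivity))
  -- The terms after the first are dominated by `(3/7)^m` times the first, so they cannot cancel it.
  have first_le := norm_sub_le_of_geometric_bound_of_hasSum (by norm_num) term_le hasSum 1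
  have first_norm : ‖2 * (-1 : ℂ) ^ 0 * Complex.exp (π * I * τ * ((0 : ℕ) + 1 / 2) ^ 2) *
      Complex.sin ((2 * (0 : ℕ) + 1) * (π * z))‖ =
      2 * Real.exp (-(π * τ.im / 4)) * ‖Complex.sin (π * z)‖ := by
    rw [norm_mul, norm_mul, norm_exp_pi_mul_I_mul,
      show -(π * τ.im * ((0 : ℕ) + 1 / 2) ^ 2) = -(π * τ.im / 4) by push_cast; ring]
    simp
  rw [Finset.sum_range_one, sub_zero, first_norm] at first_le
  norm_num at first_le
  have sin_norm : Real.exp (-(π * τ.im / 4)) * ‖Complex.sin (π * z)‖ = 0 :=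
    le_antisymm (by linarith) (by positivity)
  simpa [Real.exp_ne_zero] using sin_norm

lemma mem_periodLattice_of_theta_eq_zero_of_two_le_im (hτ : 2 ≤ τ.im) {z : ℂ}
    (h : θ τ z = 0) : z ∈ periodLattice τ := by
  set n := round (z.im / τ.im)
  have hτ_pos : 0 < τ.im := by linarith
  have n_mul_mem : n * τ ∈ periodLattice τ := mem_periodLattice.mpr ⟨0, n, by push_cast; ring⟩
  have im_le : |(z - n * τ).im| ≤ τ.im / 2 := by
    have round_le := abs_sub_round (z.im / τ.im)
    have im_eq : (z - n * τ).im = (z.im / τ.im - n) * τ.im := by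
      rw [Complex.sub_im, ← Complex.ofReal_intCast, Complex.im_ofReal_mul, sub_mul,
        div_mul_cancel₀ _ hτ_pos.ne']
    rw [im_eq, abs_mul, abs_of_pos hτ_pos]
    nlinarith
  have theta_sub : θ τ (z - n * τ) = 0 := by
    rwa [← theta_add_eq_zero_iff n_mul_mem, sub_add_cancel]
  obtain ⟨k, hk⟩ := Complex.sin_eq_zero_iff.mp (sin_eq_zero_of_theta_eq_zero hτ im_le theta_sub)
  rw [mul_comm, mul_left_inj' (by exact_mod_cast Real.pi_ne_zero), sub_eq_iff_eq_add] at hk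
  exact mem_periodLattice.mpr ⟨k, n, by rw [hk, mul_comm τ]⟩

lemma theta_mul_theta2 (hτ : 0 < τ.im) (z : ℂ) :
    θ τ z * θ2 τ z = θ (2 * τ) (2 * z) * θ4 (2 * τ) 0 := by
  have product := theta_add_mul_theta_sub hτ (z + 1 / 4) (-(1 / 4))
  have theta2_eq : θ2 (2 * τ) (2 * (z + 1 / 4)) = -θ (2 * τ) (2 * z) := by
    rw [← theta2_add_half]
    ring_nf
  have theta2_half : θ2 (2 * τ) (2 * -(1 / 4)) = 0 := by
    rw [← theta_zero (2 * τ), θ2]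
    ring_nf
  have theta3_half : θ3 (2 * τ) (2 * -(1 / 4)) = θ4 (2 * τ) 0 := by
    rw [θ4, ← theta3_neg]
    ring_nf
  rw [theta2_eq, theta2_half, theta3_half] at product
  rw [θ2, show z + 1 / 2 = z + 1 / 4 - -(1 / 4) by ring]
  ring_nf at product ⊢
  exact product

lemma theta2_zero_sq (hτ : 0 < τ.im) :
    θ2 τ 0 ^ 2 = 2 * (θ2 (2 * τ) 0 * θ3 (2 * τ) 0) := by
  have product := theta2_add_mul_theta2_sub hτ 0 0
  simp only [add_zero, sub_zero, mul_zero] at product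
  linear_combination product

lemma mem_periodLattice_of_theta_eq_zero_of_double (hτ : 0 < τ.im)
    (h2τ : ∀ w, θ (2 * τ) w = 0 → w ∈ periodLattice (2 * τ)) {z : ℂ} (hz : θ τ z = 0) :
    z ∈ periodLattice τ := by
  have h2τ_im : (2 * τ).im ≠ 0 := by simp [hτ.ne']
  have thetanull_ne (j : Fin 4) (hj : 0 ≠ j) : thetaFamily (2 * τ) j 0 ≠ 0 := by
    rw [Ne, thetaFamily_eq_zero_iff_theta]
    refine fun h => hj ((halfPeriod_add_mem_periodLattice_iff h2τ_im 0 j).mp ?_)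
    simpa [halfPeriod] using h2τ _ h
  have theta_double : θ (2 * τ) (2 * z) = 0 := by
    have duplication := theta_mul_theta2 hτ z
    rw [hz, zero_mul, eq_comm, mul_eq_zero] at duplication
    exact duplication.resolve_right (thetanull_ne 3 (by decide))
  obtain ⟨m, n, hmn⟩ := mem_periodLattice.mp (h2τ _ theta_double)
  obtain ⟨k, rfl | rfl⟩ := Int.even_or_odd' m
  · exact mem_periodLattice.mpr ⟨k, n, by push_cast at hmn; linear_combination hmn / 2⟩
  · have mem : (k + τ * n : ℂ) ∈ periodLattice τ := mem_periodLattice.mpr ⟨k, n, rfl⟩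
    have z_eq : z = 0 + 1 / 2 + (k + τ * n) := by push_cast at hmn; linear_combination hmn / 2
    rw [z_eq, theta_add_eq_zero_iff mem, theta_add_half] at hz
    have thetanull_mul : θ2 (2 * τ) 0 * θ3 (2 * τ) 0 = 0 := by
      linear_combination θ2 τ 0 / 2 * hz - theta2_zero_sq hτ / 2
    exact absurd thetanull_mul
      (mul_ne_zero (thetanull_ne 1 (by decide)) (thetanull_ne 2 (by decide)))

theorem theta_eq_zero_iff (hτ : 0 < τ.im) (z : ℂ) : θ τ z = 0 ↔ z ∈ periodLattice τ := by
  refine ⟨?_, theta_eq_zero_of_mem⟩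
  obtain ⟨k, hk⟩ : ∃ k : ℕ, 2 ≤ 2 ^ k * τ.im := by
    obtain ⟨k, hk⟩ := pow_unbounded_of_one_lt (2 / τ.im) one_lt_two
    exact ⟨k, ((div_lt_iff₀ hτ).mp hk).le⟩
  induction k generalizing τ z with
  | zero => exact mem_periodLattice_of_theta_eq_zero_of_two_le_im (by simpa using hk)
  | succ k ih =>
    refine mem_periodLattice_of_theta_eq_zero_of_double hτ fun w => ih (by simpa using hτ) w ?_
    simpa [pow_succ, mul_assoc] using hk

theorem thetaFamily_eq_zero_iff (hτ : 0 < τ.im) (j : Fin 4) (z : ℂ) :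
    thetaFamily τ j z = 0 ↔ z + halfPeriod τ j ∈ periodLattice τ := by
  rw [thetaFamily_eq_zero_iff_theta, theta_eq_zero_iff hτ]

end Zeros

section Nonvanishing

lemma halfPeriod_zero (τ : ℂ) : halfPeriod τ 0 = 0 := by simp [halfPeriod]

lemma thetaFamily_add_one (τ w : ℂ) (j : Fin 4) :
    thetaFamily τ j (w + 1) = ![-1, -1, 1, 1] j * thetaFamily τ j w := by
  fin_cases j
  · simp [thetaFamily, theta_add_one]
  · simp [thetaFamily, theta2_add_one]
  · simp [thetaFamily, theta3_add_one]
  · simp [thetaFamily, θ4, add_right_comm w 1, theta3_add_one]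

variable {τ : ℂ} (hτ : 0 < τ.im)
include hτ

theorem thetaFamily_halfPeriod_eq_zero_iff (i j : Fin 4) :
    thetaFamily τ i (halfPeriod τ j) = 0 ↔ j = i := by
  rw [thetaFamily_eq_zero_iff hτ, halfPeriod_add_mem_periodLattice_iff hτ.ne']

lemma thetaFamily_zero_ne_zero {j : Fin 4} (hj : j ≠ 0) : thetaFamily τ j 0 ≠ 0 := by
  simpa only [halfPeriod_zero] using (thetaFamily_halfPeriod_eq_zero_iff hτ j 0).not.mpr hj.symm

lemma thetaFamily_ne_zero_of_two_mul_notMem {η : ℂ} (hη : 2 * η ∉ periodLattice τ) (j : Fin 4) :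
    thetaFamily τ j η ≠ 0 := by
  rw [Ne, thetaFamily_eq_zero_iff hτ]
  intro hmem
  have two_halfPeriod : halfPeriod τ j + halfPeriod τ j ∈ periodLattice τ :=
    (halfPeriod_add_mem_periodLattice_iff hτ.ne' j j).mpr rfl
  refine hη ?_
  rw [show 2 * η = η + halfPeriod τ j + (η + halfPeriod τ j) - (halfPeriod τ j + halfPeriod τ j) by
    ring]
  exact sub_mem (add_mem hmem hmem) two_halfPeriod

end Nonvanishing

section Independence

lemma smul_add_smul_eq_zero_iff_of_zeros {R M ι : Type*} [DivisionRing R] [AddCommGroup M]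
    [Module R M] {f g : ι → R} {a b : ι} (fa : f a = 0) (ga : g a ≠ 0)
    (gb : g b = 0) (fb : f b ≠ 0) {m n : M} :
    (∀ w, f w • m + g w • n = 0) ↔ m = 0 ∧ n = 0 := by
  refine ⟨fun H => ⟨?_, ?_⟩, fun ⟨hm, hn⟩ w => by rw [hm, hn, smul_zero, smul_zero, add_zero]⟩
  · have at_b := H b
    rwa [gb, zero_smul, add_zero, smul_eq_zero_iff_right fb] at at_b
  · have at_a := H a
    rwa [fa, zero_smul, zero_add, smul_eq_zero_iff_right ga] at at_a

theorem eq_zero_of_forall_sum_thetaFamily_smul {M : Type*} [AddCommGroup M] [Module ℂ M] {τ : ℂ}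
    (hτ : 0 < τ.im) {m : Fin 4 → M} (H : ∀ w, ∑ j, thetaFamily τ j w • m j = 0) : m = 0 := by
  have split : ∀ w, thetaFamily τ 0 w • m 0 + thetaFamily τ 1 w • m 1 = 0 ∧
      thetaFamily τ 2 w • m 2 + thetaFamily τ 3 w • m 3 = 0 := by
    intro w
    have at_w := H w
    have at_add_one := H (w + 1)
    simp only [Fin.sum_univ_four, thetaFamily_add_one, Matrix.cons_val, one_mul, neg_mul]
      at at_w at_add_one
    constructor <;> refine (smul_eq_zero_iff_right (two_ne_zero' ℂ)).mp ?_
    · linear_combination (norm := module) at_w - at_add_one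
    · linear_combination (norm := module) at_w + at_add_one
  have zero (j : Fin 4) : thetaFamily τ j (halfPeriod τ j) = 0 :=
    (thetaFamily_halfPeriod_eq_zero_iff hτ j j).mpr rfl
  have nonzero {i j : Fin 4} (hij : j ≠ i) : thetaFamily τ i (halfPeriod τ j) ≠ 0 :=
    (thetaFamily_halfPeriod_eq_zero_iff hτ i j).not.mpr hij
  obtain ⟨m0, m1⟩ := (smul_add_smul_eq_zero_iff_of_zeros (zero 0) (nonzero (by decide))
    (zero 1) (nonzero (by decide))).mp fun w => (split w).1
  obtain ⟨m2, m3⟩ := (smul_add_smul_eq_zero_iff_of_zeros (zero 2) (nonzero (by decide))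
    (zero 3) (nonzero (by decide))).mp fun w => (split w).2
  funext j
  fin_cases j
  exacts [m0, m1, m2, m3]

end Independence

/-! ### Addition formulas -/

section Addition

section HalfPeriodShifts

variable (τ z : ℂ)

lemma theta_add_half_add_half_period :
    θ τ (z + (1 / 2 + τ / 2)) = halfPeriodFactor τ z * θ3 τ z := by
  rw [← theta2_add_half_period, θ2]
  congr 1
  ring

lemma theta_sub_half : θ τ (z - 1 / 2) = -θ2 τ z := by
  rw [← neg_eq_iff_eq_neg, ← theta2_add_half, sub_add_cancel]

lemma theta_sub_half_period : θ τ (z - τ / 2) = -(I * halfPeriodFactor τ (-z) * θ4 τ z) := by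
  rw [← neg_sub, theta_neg, sub_eq_add_neg, add_comm, theta_add_half_period, theta4_neg]

lemma theta_half : θ τ (1 / 2) = θ2 τ 0 := by rw [← theta_add_half, zero_add]

lemma theta_half_period : θ τ (τ / 2) = I * halfPeriodFactor τ 0 * θ4 τ 0 := by
  rw [← theta_add_half_period, zero_add]

lemma theta_half_add_half_period : θ τ (1 / 2 + τ / 2) = halfPeriodFactor τ 0 * θ3 τ 0 := by
  rw [← theta_add_half_add_half_period, zero_add]

end HalfPeriodShifts

/-- The addition formulas expressing `f(u+h)g(u-h)` and `k(u+h)l(u-h)` through the products `fg`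
and `kl`, for a splitting `{f, g}`, `{k, l}` of the four theta functions with `f` the odd one. -/
structure ThetaAddition (f g k l : ℂ → ℂ) : Prop where
  mul_neg_left : ∀ h, f (-h) * g (-h) = -(f h * g h)
  mul_neg_right : ∀ h, k (-h) * l (-h) = k h * l h
  add_mul_sub_left : ∀ u h, f (u + h) * g (u - h) * (k 0 * l 0) =
    f u * g u * (k h * l h) + k u * l u * (f h * g h)
  add_mul_sub_right : ∀ u h, k (u + h) * l (u - h) * (k 0 * l 0) =
    k u * l u * (k h * l h) - f u * g u * (f h * g h)

variable {τ : ℂ} (hτ : 0 < τ.im)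
include hτ

lemma theta_add_mul_theta_sub_add (u h v w : ℂ) :
    θ τ (u + h) * θ τ (u - h + (v + w)) * (θ τ v * θ τ w) =
      θ τ u * θ τ (u + (v + w)) * (θ τ (-h + v) * θ τ (-h + w)) +
        θ τ (u + v) * θ τ (u + w) * (θ τ h * θ τ (-h + (v + w))) := by
  have three_term := theta_three_term hτ (u + (v + w) / 2) (h - (v + w) / 2) ((v - w) / 2)
    ((v + w) / 2)
  rw [show u + (v + w) / 2 + (h - (v + w) / 2) = u + h by ring,
    show u + (v + w) / 2 - (h - (v + w) / 2) = u - h + (v + w) by ring,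
    show (v - w) / 2 + (v + w) / 2 = v by ring,
    show (v - w) / 2 - (v + w) / 2 = -w by ring,
    show u + (v + w) / 2 + (v - w) / 2 = u + v by ring,
    show u + (v + w) / 2 - (v - w) / 2 = u + w by ring,
    show h - (v + w) / 2 + (v + w) / 2 = h by ring,
    show h - (v + w) / 2 - (v + w) / 2 = -(-h + (v + w)) by ring,
    show u + (v + w) / 2 + (v + w) / 2 = u + (v + w) by ring,
    show u + (v + w) / 2 - (v + w) / 2 = u by ring,
    show h - (v + w) / 2 + (v - w) / 2 = -(-h + w) by ring,
    show h - (v + w) / 2 - (v - w) / 2 = -(-h + v) by ring,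
    theta_neg, theta_neg, theta_neg, theta_neg] at three_term
  linear_combination -three_term

lemma theta_add_mul_theta2_sub (u h : ℂ) : θ τ (u + h) * θ2 τ (u - h) * (θ3 τ 0 * θ4 τ 0) =
    θ τ u * θ2 τ u * (θ3 τ h * θ4 τ h) + θ3 τ u * θ4 τ u * (θ τ h * θ2 τ h) := by
  have shifted := theta_add_mul_theta_sub_add hτ u h (1 / 2 + τ / 2) (-(τ / 2))
  rw [add_neg_cancel_right] at shifted
  simp only [← sub_eq_add_neg, theta_neg, theta_add_half, theta_add_half_add_half_period,
    theta_sub_half_period, theta_half_period, theta_half_add_half_period, neg_neg, theta2_neg,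
    theta3_neg, theta4_neg] at shifted
  refine mul_left_cancel₀ (mul_ne_zero I_ne_zero
    (mul_ne_zero (halfPeriodFactor_ne_zero τ 0) (halfPeriodFactor_ne_zero τ 0))) ?_
  have factor_u := halfPeriodFactor_mul τ u (-u)
  have factor_h := halfPeriodFactor_mul τ h (-h)
  rw [add_neg_cancel] at factor_u factor_h
  linear_combination -shifted + I * θ3 τ u * θ4 τ u * θ τ h * θ2 τ h * factor_u +
    I * θ τ u * θ2 τ u * θ3 τ h * θ4 τ h * factor_h

lemma theta_add_mul_theta3_sub (u h : ℂ) : θ τ (u + h) * θ3 τ (u - h) * (θ2 τ 0 * θ4 τ 0) =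
    θ τ u * θ3 τ u * (θ2 τ h * θ4 τ h) + θ2 τ u * θ4 τ u * (θ τ h * θ3 τ h) := by
  have shifted := theta_add_mul_theta_sub_add hτ u h (1 / 2) (τ / 2)
  simp only [theta_add_half, theta_add_half_period, theta_add_half_add_half_period,
    theta_half, theta_half_period, theta2_neg, theta3_neg, theta4_neg] at shifted
  refine mul_left_cancel₀ (mul_ne_zero I_ne_zero
    (mul_ne_zero (halfPeriodFactor_ne_zero τ 0) (halfPeriodFactor_ne_zero τ (u - h)))) ?_
  have factor := halfPeriodFactor_mul τ u (-h)
  rw [← sub_eq_add_neg] at factor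
  linear_combination shifted + I * (θ τ u * θ3 τ u * (θ2 τ h * θ4 τ h) +
    θ2 τ u * θ4 τ u * (θ τ h * θ3 τ h)) * factor

lemma theta_add_mul_theta4_sub (u h : ℂ) : θ τ (u + h) * θ4 τ (u - h) * (θ2 τ 0 * θ3 τ 0) =
    θ τ u * θ4 τ u * (θ2 τ h * θ3 τ h) + θ2 τ u * θ3 τ u * (θ τ h * θ4 τ h) := by
  have shifted := theta_add_mul_theta_sub_add hτ u h (1 / 2 + τ / 2) (-(1 / 2))
  rw [show (1 / 2 + τ / 2 + -(1 / 2) : ℂ) = τ / 2 by ring, theta_half_add_half_period] at shifted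
  simp only [← sub_eq_add_neg, theta_neg, theta_sub_half, theta_add_half_period,
    theta_add_half_add_half_period, theta_half, theta2_neg, theta3_neg, theta4_neg] at shifted
  refine mul_left_cancel₀ (mul_ne_zero I_ne_zero
    (mul_ne_zero (halfPeriodFactor_ne_zero τ 0) (halfPeriodFactor_ne_zero τ (u - h)))) ?_
  have factor := halfPeriodFactor_mul τ u (-h)
  rw [← sub_eq_add_neg] at factor
  linear_combination -shifted + I * (θ τ u * θ4 τ u * (θ2 τ h * θ3 τ h) +
    θ2 τ u * θ3 τ u * (θ τ h * θ4 τ h)) * factor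

theorem thetaAddition_theta2 : ThetaAddition (θ τ) (θ2 τ) (θ3 τ) (θ4 τ) where
  mul_neg_left h := by rw [theta_neg, theta2_neg, neg_mul]
  mul_neg_right h := by rw [theta3_neg, theta4_neg]
  add_mul_sub_left := theta_add_mul_theta2_sub hτ
  add_mul_sub_right u h := by
    have shifted := theta_add_mul_theta2_sub hτ (u + τ / 2) (-h)
    rw [show u + τ / 2 + -h = u - h + τ / 2 by ring, show u + τ / 2 - -h = u + h + τ / 2 by ring]
      at shifted
    simp only [theta_neg, theta2_neg, theta3_neg, theta4_neg, theta_add_half_period,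
      theta2_add_half_period, theta3_add_half_period, theta4_add_half_period] at shifted
    have factor : halfPeriodFactor τ (u - h) * halfPeriodFactor τ (u + h) =
        halfPeriodFactor τ u ^ 2 := by
      rw [halfPeriodFactor_mul, sq, halfPeriodFactor_mul τ u, sub_add_add_cancel]
    refine mul_left_cancel₀ (mul_ne_zero I_ne_zero
      (pow_ne_zero 2 (halfPeriodFactor_ne_zero τ u))) ?_
    linear_combination shifted - I * θ3 τ (u + h) * θ4 τ (u - h) * (θ3 τ 0 * θ4 τ 0) * factor

theorem thetaAddition_theta3 : ThetaAddition (θ τ) (θ3 τ) (θ2 τ) (θ4 τ) where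
  mul_neg_left h := by rw [theta_neg, theta3_neg, neg_mul]
  mul_neg_right h := by rw [theta2_neg, theta4_neg]
  add_mul_sub_left := theta_add_mul_theta3_sub hτ
  add_mul_sub_right u h := by
    have shifted := theta_add_mul_theta3_sub hτ (u + 1 / 2) h
    rw [add_right_comm, add_sub_right_comm] at shifted
    simp only [theta_add_half, theta2_add_half, theta3_add_half, theta4_add_half] at shifted
    linear_combination shifted

theorem thetaAddition_theta4 : ThetaAddition (θ τ) (θ4 τ) (θ2 τ) (θ3 τ) where
  mul_neg_left h := by rw [theta_neg, theta4_neg, neg_mul]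
  mul_neg_right h := by rw [theta2_neg, theta3_neg]
  add_mul_sub_left := theta_add_mul_theta4_sub hτ
  add_mul_sub_right u h := by
    have shifted := theta_add_mul_theta4_sub hτ (u + 1 / 2) h
    rw [add_right_comm, add_sub_right_comm] at shifted
    simp only [theta_add_half, theta2_add_half, theta3_add_half, theta4_add_half] at shifted
    linear_combination shifted

end Addition

/-! ### The theta basis of `V` -/

section ThetaComb

variable (τ : ℂ) {M N : Type*} [AddCommGroup M] [Module ℂ M] [AddCommGroup N] [Module ℂ N]

/-- The combination `∑ⱼ ±θⱼ(p)θⱼ(q)θⱼ(r)xⱼ` with the signs of Riemann's quartic relation. For `xⱼ`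
the function `z ↦ θⱼ(2z)` it is `2f(α,β,γ;z)`, where `p = α+β`, `q = α+γ` and `r = β+γ`. -/
def thetaComb (x : Fin 4 → M) (p q r : ℂ) : M :=
  ∑ j, ((![-1, -1, 1, -1] j : ℂ) *
    (thetaFamily τ j p * thetaFamily τ j q * thetaFamily τ j r)) • x j

lemma map_thetaComb (φ : M →ₗ[ℂ] N) (x : Fin 4 → M) (p q r : ℂ) :
    φ (thetaComb τ x p q r) = thetaComb τ (fun j => φ (x j)) p q r := by
  simp only [thetaComb, map_sum, map_smul]

/-- The functions `z ↦ θⱼ(2z)`, which form a basis of `V`. -/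
def doubledTheta (j : Fin 4) : ℂ → ℂ := fun z => thetaFamily τ j (2 * z)

variable {τ} (hτ : 0 < τ.im)
include hτ

theorem fV_eq_smul_thetaComb (α β γ : ℂ) :
    fV τ α β γ = (1 / 2 : ℂ) • thetaComb τ (doubledTheta τ) (α + β) (α + γ) (β + γ) := by
  funext z
  have quartic := riemann_quartic hτ (z + (α + β) / 2) ((α - β) / 2) (z - (α + β) / 2)
    (γ + (α + β) / 2)
  rw [show z + (α + β) / 2 + (α - β) / 2 = z + α by ring,
    show z + (α + β) / 2 - (α - β) / 2 = z + β by ring,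
    show z - (α + β) / 2 + (γ + (α + β) / 2) = z + γ by ring,
    show z - (α + β) / 2 - (γ + (α + β) / 2) = z - α - β - γ by ring,
    show z + (α + β) / 2 + (z - (α + β) / 2) = 2 * z by ring,
    show z + (α + β) / 2 - (z - (α + β) / 2) = α + β by ring,
    show γ + (α + β) / 2 + (α - β) / 2 = α + γ by ring,
    show γ + (α + β) / 2 - (α - β) / 2 = β + γ by ring] at quartic
  simp only [fV, thetaComb, doubledTheta, thetaFamily, Fin.sum_univ_four, Matrix.cons_val,
    Pi.smul_apply, Pi.add_apply, smul_eq_mul]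
  linear_combination quartic / 2

lemma thetaComb_doubledTheta_mem (p q r : ℂ) : thetaComb τ (doubledTheta τ) p q r ∈ Vsub τ := by
  have two_smul_fV_mem := (Vsub τ).smul_mem 2
    (fVmem τ ((p + q - r) / 2) ((p + r - q) / 2) ((q + r - p) / 2))
  rw [fV_eq_smul_thetaComb hτ, smul_smul, show (2 : ℂ) * (1 / 2) = 1 by norm_num, one_smul,
    show (p + q - r) / 2 + (p + r - q) / 2 = p by ring,
    show (p + q - r) / 2 + (q + r - p) / 2 = q by ring,
    show (p + r - q) / 2 + (q + r - p) / 2 = r by ring] at two_smul_fV_mem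
  exact two_smul_fV_mem

lemma thetaComb_halfPeriod (x : Fin 4 → M) (j : Fin 4) :
    ∃ c : ℂ, c ≠ 0 ∧ thetaComb τ x (halfPeriod τ (j + 1)) (halfPeriod τ (j + 2))
      (halfPeriod τ (j + 3)) = c • x j := by
  have eq_add_of_ne : ∀ i j : Fin 4, i ≠ j → j + 1 = i ∨ j + 2 = i ∨ j + 3 = i := by decide
  have add_ne : ∀ j : Fin 4, j + 1 ≠ j ∧ j + 2 ≠ j ∧ j + 3 ≠ j := by decide
  have sign_ne : ∀ j : Fin 4, (![-1, -1, 1, -1] j : ℂ) ≠ 0 := by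
    intro j
    fin_cases j <;> simp
  refine ⟨_, ?_, Finset.sum_eq_single j (fun i _ hij => ?_) (by simp)⟩
  · simpa only [Ne, mul_eq_zero, thetaFamily_halfPeriod_eq_zero_iff hτ, not_or, and_assoc]
      using ⟨sign_ne j, add_ne j⟩
  · rw [smul_eq_zero]
    left
    simpa only [mul_eq_zero, thetaFamily_halfPeriod_eq_zero_iff hτ, or_assoc]
      using .inr (eq_add_of_ne i j hij)

lemma doubledTheta_mem (j : Fin 4) : doubledTheta τ j ∈ Vsub τ := by
  obtain ⟨c, hc, comb_eq⟩ := thetaComb_halfPeriod hτ (doubledTheta τ) j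
  rw [← Submodule.smul_mem_iff _ hc, ← comb_eq]
  exact thetaComb_doubledTheta_mem hτ _ _ _

theorem linearIndependent_doubledTheta : LinearIndependent ℂ (doubledTheta τ) := by
  rw [Fintype.linearIndependent_iff]
  intro g hg
  refine congrFun (eq_zero_of_forall_sum_thetaFamily_smul hτ fun w => ?_)
  simpa [doubledTheta, mul_div_cancel₀, mul_comm] using congrFun hg (w / 2)

theorem span_range_doubledTheta : Submodule.span ℂ (Set.range (doubledTheta τ)) = Vsub τ := by
  refine le_antisymm (Submodule.span_le.mpr (Set.range_subset_iff.mpr (doubledTheta_mem hτ)))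
    (Submodule.span_le.mpr ?_)
  rintro _ ⟨c, a, ha, rfl⟩
  have eq_smul_fV : (fun z => c * ∏ i, θ τ (z + a i)) = c • fV τ (a 0) (a 1) (a 2) := by
    funext z
    rw [Fin.sum_univ_four] at ha
    rw [Pi.smul_apply, fV, Fin.prod_univ_four,
      show z - a 0 - a 1 - a 2 = z + a 3 by linear_combination -ha, smul_eq_mul]
  rw [eq_smul_fV, fV_eq_smul_thetaComb hτ]
  exact Submodule.smul_mem _ _ (Submodule.smul_mem _ _ (Submodule.sum_mem _ fun j _ =>
    Submodule.smul_mem _ _ (Submodule.subset_span ⟨j, rfl⟩)))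

/-- The basis of `V` formed by the functions `z ↦ θⱼ(2z)`. -/
def thetaBasis : Module.Basis (Fin 4) ℂ (Vsub τ) :=
  (Module.Basis.span (linearIndependent_doubledTheta hτ)).map
    (LinearEquiv.ofEq _ _ (span_range_doubledTheta hτ))

lemma coe_thetaBasis (j : Fin 4) : (thetaBasis hτ j : ℂ → ℂ) = doubledTheta τ j := by
  rw [thetaBasis, Module.Basis.map_apply, LinearEquiv.coe_ofEq_apply, Module.Basis.span_apply]

theorem elemV_eq_smul_thetaComb (α β γ : ℂ) :
    elemV τ α β γ = (1 / 2 : ℂ) • thetaComb τ (thetaBasis hτ) (α + β) (α + γ) (β + γ) := by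
  refine Subtype.ext ?_
  have coe_comb := map_thetaComb τ (Vsub τ).subtype (thetaBasis hτ) (α + β) (α + γ) (β + γ)
  simp only [Submodule.subtype_apply, coe_thetaBasis] at coe_comb
  rw [Submodule.coe_smul, coe_comb]
  exact fV_eq_smul_thetaComb hτ α β γ

end ThetaComb

/-! ### Commutator relations -/

section CommutatorRel

variable {𝕜 A : Type*} [Field 𝕜] [Ring A] [Algebra 𝕜 A]

/-- The pair of quadratic relations `[x, y] = J{z, w}` and `[z, w] = K{x, y}` between commutators
and anticommutators. The relations of the Sklyanin algebra consist of three such pairs. -/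
def CommutatorRel (J K : 𝕜) (x y z w : A) : Prop :=
  x * y - y * x = J • (z * w + w * z) ∧ z * w - w * z = K • (x * y + y * x)

lemma commutatorRel_swap {J K : 𝕜} {x y z w : A} :
    CommutatorRel J K x y w z ↔ CommutatorRel J (-K) x y z w := by
  rw [CommutatorRel, CommutatorRel, ← neg_inj (a := w * z - z * w), neg_sub, neg_smul,
    add_comm (w * z)]

lemma commutatorRel_smul {a b c d : 𝕜} (ha : a ≠ 0) (hb : b ≠ 0) (hc : c ≠ 0) (hd : d ≠ 0)
    {J K : 𝕜} {x y z w : A} :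
    CommutatorRel J K (a • x) (b • y) (c • z) (d • w) ↔
      CommutatorRel (J * (c * d) / (a * b)) (K * (a * b) / (c * d)) x y z w := by
  have smul_eq_smul_iff {p : 𝕜} (hp : p ≠ 0) (q r : 𝕜) (m n : A) :
      p • m = q • r • n ↔ m = (q * r / p) • n := by
    rw [div_eq_inv_mul, mul_smul, mul_smul, eq_inv_smul_iff₀ hp]
  simp only [CommutatorRel, smul_mul_smul_comm, mul_comm b a, mul_comm d c, ← smul_add, ← smul_sub,
    smul_eq_smul_iff (mul_ne_zero ha hb), smul_eq_smul_iff (mul_ne_zero hc hd)]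

lemma smul_and_smul_eq_zero_iff_commutatorRel {a b : 𝕜} (ha : a ≠ 0) {x y z w : A} :
    a • (x * y - y * x) + b • (z * w + w * z) = 0 ∧
        a • (z * w - w * z) - b • (x * y + y * x) = 0 ↔
      CommutatorRel (-(b / a)) (b / a) x y z w := by
  obtain ⟨r, rfl⟩ : ∃ r, b = a * r := ⟨b / a, (mul_div_cancel₀ b ha).symm⟩
  rw [mul_div_cancel_left₀ r ha, mul_smul, mul_smul, ← smul_add, ← smul_sub,
    smul_eq_zero_iff_right ha, smul_eq_zero_iff_right ha, add_eq_zero_iff_eq_neg, sub_eq_zero,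
    ← neg_smul]
  rfl

end CommutatorRel

section Relations

variable {A : Type*} [Ring A] [Algebra ℂ A]

/-- The combination of products of two variables that occurs in the expansion of the relations
`F_η`: twisted commutators of `x, y` and of `z, w`, with coefficients built from a splitting
`{f, g}`, `{k, l}` of the four theta functions. -/
def twistedPairing (f g k l : ℂ → ℂ) (η s : ℂ) (x y z w : A) : A :=
  (f (s - η) * g (s + η)) • (x * y) - (g (s - η) * f (s + η)) • (y * x) +
    ((k (s - η) * l (s + η)) • (z * w) - (l (s - η) * k (s + η)) • (w * z))

lemma ThetaAddition.smul_twistedPairing {f g k l : ℂ → ℂ} (h : ThetaAddition f g k l) (η s : ℂ)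
    (x y z w : A) : (k 0 * l 0) • twistedPairing f g k l η s x y z w =
      (f s * g s) • ((k η * l η) • (x * y - y * x) + (f η * g η) • (z * w + w * z)) +
        (k s * l s) • ((k η * l η) • (z * w - w * z) - (f η * g η) • (x * y + y * x)) := by
  have fg := h.add_mul_sub_left s (-η)
  have gf := h.add_mul_sub_left s η
  have kl := h.add_mul_sub_right s (-η)
  have lk := h.add_mul_sub_right s η
  rw [h.mul_neg_left, h.mul_neg_right, ← sub_eq_add_neg, sub_neg_eq_add] at fg kl
  simp only [twistedPairing]
  linear_combination (norm := module) fg • (x * y) - gf • (y * x) + kl • (z * w) - lk • (w * z)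

lemma ThetaAddition.forall_twistedPairing_eq_zero_iff {f g k l : ℂ → ℂ}
    (h : ThetaAddition f g k l) {η v : ℂ} (f_zero : f 0 = 0) (k_zero : k 0 ≠ 0) (l_zero : l 0 ≠ 0)
    (f_v : f v ≠ 0) (g_v : g v ≠ 0) (l_v : l v = 0) (k_η : k η ≠ 0) (l_η : l η ≠ 0)
    {x y z w : A} :
    (∀ s, twistedPairing f g k l η s x y z w = 0) ↔
      CommutatorRel (-(f η * g η / (k η * l η))) (f η * g η / (k η * l η)) x y z w := by
  have kl_zero := mul_ne_zero k_zero l_zero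
  have kl_η := mul_ne_zero k_η l_η
  have fg_zero : f 0 * g 0 = 0 := by rw [f_zero, zero_mul]
  have kl_v : k v * l v = 0 := by rw [l_v, mul_zero]
  calc
    _ ↔ ∀ s, (k 0 * l 0) • twistedPairing f g k l η s x y z w = 0 := by
      simp only [smul_eq_zero_iff_right kl_zero]
    _ ↔ _ := by
      simp only [h.smul_twistedPairing]
      exact smul_add_smul_eq_zero_iff_of_zeros (f := fun s => f s * g s)
        (g := fun s => k s * l s) fg_zero kl_zero kl_v (mul_ne_zero f_v g_v)
    _ ↔ _ := by
      exact smul_and_smul_eq_zero_iff_commutatorRel kl_η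

variable {τ : ℂ} (hτ : 0 < τ.im)
include hτ

lemma thetaComb_mul_sub_swap (η s h u₁ u₂ : ℂ) (x : Fin 4 → A) :
    thetaComb τ x (s - η) (u₁ + h) (u₁ - h) * thetaComb τ x (s + η) (u₂ + h) (u₂ - h) -
      thetaComb τ x (s - η) (u₂ + h) (u₂ - h) * thetaComb τ x (s + η) (u₁ + h) (u₁ - h) =
    (θ τ (u₁ + u₂) * θ τ (u₁ - u₂)) •
      ((θ2 τ (2 * h) * θ2 τ 0) •
          twistedPairing (θ τ) (θ2 τ) (θ3 τ) (θ4 τ) η s (x 0) (x 1) (x 2) (x 3) -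
        (θ3 τ (2 * h) * θ3 τ 0) •
          twistedPairing (θ τ) (θ3 τ) (θ2 τ) (θ4 τ) η s (x 0) (x 2) (x 1) (x 3) +
        (θ4 τ (2 * h) * θ4 τ 0) •
          twistedPairing (θ τ) (θ4 τ) (θ2 τ) (θ3 τ) η s (x 0) (x 3) (x 1) (x 2)) := by
  have duplication2 := theta2_add_mul_theta2_sub hτ h h
  have duplication3 := theta3_add_mul_theta3_sub hτ h h
  have duplication4 := theta4_add_mul_theta4_sub hτ h h
  rw [sub_self, ← two_mul] at duplication2 duplication3 duplication4
  rw [duplication2, duplication3, duplication4, theta_add_mul_theta_sub hτ]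
  simp only [thetaComb, Fin.sum_univ_four, thetaFamily, Matrix.cons_val, mul_assoc,
    theta_add_mul_theta_sub hτ, theta2_add_mul_theta2_sub hτ,
    theta3_add_mul_theta3_sub hτ, theta4_add_mul_theta4_sub hτ]
  simp only [twistedPairing, mul_add, add_mul, smul_mul_assoc, mul_smul_comm]
  module

/-- The relations `F_η` in terms of the functions `z ↦ θⱼ(2z)`: three pairs of relations between
commutators and anticommutators, one for each splitting of the four theta functions into pairs. -/
def ThetaRel (τ η : ℂ) (x : Fin 4 → A) : Prop :=
  CommutatorRel (-(θ τ η * θ2 τ η / (θ3 τ η * θ4 τ η))) (θ τ η * θ2 τ η / (θ3 τ η * θ4 τ η))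
      (x 0) (x 1) (x 2) (x 3) ∧
    CommutatorRel (-(θ τ η * θ3 τ η / (θ2 τ η * θ4 τ η))) (θ τ η * θ3 τ η / (θ2 τ η * θ4 τ η))
      (x 0) (x 2) (x 1) (x 3) ∧
    CommutatorRel (-(θ τ η * θ4 τ η / (θ2 τ η * θ3 τ η))) (θ τ η * θ4 τ η / (θ2 τ η * θ3 τ η))
      (x 0) (x 3) (x 1) (x 2)

lemma thetaRel_iff_forall_twistedPairing_eq_zero {η : ℂ} (hη : 2 * η ∉ periodLattice τ)
    (x : Fin 4 → A) : ThetaRel τ η x ↔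
      (∀ s, twistedPairing (θ τ) (θ2 τ) (θ3 τ) (θ4 τ) η s (x 0) (x 1) (x 2) (x 3) = 0) ∧
      (∀ s, twistedPairing (θ τ) (θ3 τ) (θ2 τ) (θ4 τ) η s (x 0) (x 2) (x 1) (x 3) = 0) ∧
      ∀ s, twistedPairing (θ τ) (θ4 τ) (θ2 τ) (θ3 τ) η s (x 0) (x 3) (x 1) (x 2) = 0 := by
  have ne_η := thetaFamily_ne_zero_of_two_mul_notMem hτ hη
  have ne_zero {j : Fin 4} := thetaFamily_zero_ne_zero hτ (j := j)
  have eq_zero (j : Fin 4) := (thetaFamily_halfPeriod_eq_zero_iff hτ j j).mpr rfl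
  have ne_halfPeriod {i j : Fin 4} := (thetaFamily_halfPeriod_eq_zero_iff hτ i j).not.mpr
  refine (and_congr ?_ (and_congr ?_ ?_)).symm
  · exact (thetaAddition_theta2 hτ).forall_twistedPairing_eq_zero_iff (v := halfPeriod τ 3)
      (theta_zero τ) (ne_zero (j := 2) (by decide)) (ne_zero (j := 3) (by decide))
      (ne_halfPeriod (i := 0) (by decide)) (ne_halfPeriod (i := 1) (by decide)) (eq_zero 3)
      (ne_η 2) (ne_η 3)
  · exact (thetaAddition_theta3 hτ).forall_twistedPairing_eq_zero_iff (v := halfPeriod τ 3)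
      (theta_zero τ) (ne_zero (j := 1) (by decide)) (ne_zero (j := 3) (by decide))
      (ne_halfPeriod (i := 0) (by decide)) (ne_halfPeriod (i := 2) (by decide)) (eq_zero 3)
      (ne_η 1) (ne_η 3)
  · exact (thetaAddition_theta4 hτ).forall_twistedPairing_eq_zero_iff (v := halfPeriod τ 2)
      (theta_zero τ) (ne_zero (j := 1) (by decide)) (ne_zero (j := 2) (by decide))
      (ne_halfPeriod (i := 0) (by decide)) (ne_halfPeriod (i := 3) (by decide)) (eq_zero 2)
      (ne_η 1) (ne_η 2)

lemma eq_zero_of_forall_theta_mul_theta_zero_smul {M : Type*} [AddCommGroup M] [Module ℂ M]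
    {a b c : M} (H : ∀ v, (θ2 τ v * θ2 τ 0) • a - (θ3 τ v * θ3 τ 0) • b +
      (θ4 τ v * θ4 τ 0) • c = 0) : a = 0 ∧ b = 0 ∧ c = 0 := by
  have ne_zero {j : Fin 4} := thetaFamily_zero_ne_zero hτ (j := j)
  have coeff_eq_zero := eq_zero_of_forall_sum_thetaFamily_smul hτ
    (m := ![0, θ2 τ 0 • a, -(θ3 τ 0 • b), θ4 τ 0 • c]) fun v => by
      simp only [Fin.sum_univ_four, thetaFamily, Matrix.cons_val, smul_zero, zero_add, smul_neg,
        smul_smul]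
      rw [← sub_eq_add_neg, H]
  exact ⟨(smul_eq_zero_iff_right (ne_zero (j := 1) (by decide))).mp (congrFun coeff_eq_zero 1),
    (smul_eq_zero_iff_right (ne_zero (j := 2) (by decide))).mp
      (neg_eq_zero.mp (congrFun coeff_eq_zero 2)),
    (smul_eq_zero_iff_right (ne_zero (j := 3) (by decide))).mp (congrFun coeff_eq_zero 3)⟩

theorem forall_thetaComb_mul_comm_iff {η : ℂ} (hη : 2 * η ∉ periodLattice τ) (x : Fin 4 → A) :
    (∀ s h u₁ u₂,
      thetaComb τ x (s - η) (u₁ + h) (u₁ - h) * thetaComb τ x (s + η) (u₂ + h) (u₂ - h) =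
        thetaComb τ x (s - η) (u₂ + h) (u₂ - h) * thetaComb τ x (s + η) (u₁ + h) (u₁ - h)) ↔
      ThetaRel τ η x := by
  rw [thetaRel_iff_forall_twistedPairing_eq_zero hτ hη]
  simp_rw [← sub_eq_zero (a := thetaComb τ x _ _ _ * _), thetaComb_mul_sub_swap hτ]
  refine ⟨fun comm => ?_, fun ⟨pairing1, pairing2, pairing3⟩ s h u₁ u₂ => ?_⟩
  · have theta_half_ne_zero : θ τ (halfPeriod τ 1) ≠ 0 :=
      (thetaFamily_halfPeriod_eq_zero_iff hτ 0 1).not.mpr (by decide)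
    have pairings_eq_zero (s : ℂ) := eq_zero_of_forall_theta_mul_theta_zero_smul hτ fun v => by
      have comm_v := comm s (v / 2) (halfPeriod τ 1) 0
      rwa [add_zero, sub_zero, mul_div_cancel₀ v two_ne_zero,
        smul_eq_zero_iff_right (mul_ne_zero theta_half_ne_zero theta_half_ne_zero)] at comm_v
    exact ⟨fun s => (pairings_eq_zero s).1, fun s => (pairings_eq_zero s).2.1,
      fun s => (pairings_eq_zero s).2.2⟩
  · rw [pairing1, pairing2, pairing3, smul_zero, smul_zero, smul_zero, sub_zero, add_zero,
      smul_zero]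

end Relations

/-! ### The isomorphism of quotient algebras -/

section RingQuotEquiv

variable {R A B : Type*} [CommSemiring R] [Semiring A] [Algebra R A] [Semiring B] [Algebra R B]

/-- The isomorphism of quotient algebras induced by an isomorphism `e` of algebras for which `e` and
`e.symm` carry related elements to elements identified in the quotient. -/
def ringQuotEquivOfAlgEquiv {r : A → A → Prop} {s : B → B → Prop} (e : A ≃ₐ[R] B)
    (hr : ∀ ⦃x y⦄, r x y → RingQuot.mkAlgHom R s (e x) = RingQuot.mkAlgHom R s (e y))
    (hs : ∀ ⦃x y⦄, s x y → RingQuot.mkAlgHom R r (e.symm x) = RingQuot.mkAlgHom R r (e.symm y)) :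
    RingQuot r ≃ₐ[R] RingQuot s :=
  AlgEquiv.ofAlgHom
    (RingQuot.liftAlgHom R ⟨(RingQuot.mkAlgHom R s).comp (e : A →ₐ[R] B), hr⟩)
    (RingQuot.liftAlgHom R ⟨(RingQuot.mkAlgHom R r).comp (e.symm : B →ₐ[R] A), hs⟩)
    (RingQuot.ringQuot_ext' R _ _ (AlgHom.ext fun y =>
      (congrArg _ (RingQuot.liftAlgHom_mkAlgHom_apply R _ hs y)).trans
        ((RingQuot.liftAlgHom_mkAlgHom_apply R _ hr _).trans
          (congrArg _ (e.apply_symm_apply y)))))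
    (RingQuot.ringQuot_ext' R _ _ (AlgHom.ext fun x =>
      (congrArg _ (RingQuot.liftAlgHom_mkAlgHom_apply R _ hr x)).trans
        ((RingQuot.liftAlgHom_mkAlgHom_apply R _ hs _).trans
          (congrArg _ (e.symm_apply_apply x)))))

end RingQuotEquiv

section Presentations

variable {A : Type*} [Ring A] [Algebra ℂ A]

/-- The relations of the Sklyanin algebra for a quadruple of elements, grouped into the three pairs
indexed by the splittings of `{0, 1, 2, 3}` into two pairs. -/
def SklyaninRel (τ η : ℂ) (S : Fin 4 → A) : Prop :=
  CommutatorRel (I * J23 τ η) I (S 0) (S 1) (S 2) (S 3) ∧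
    CommutatorRel (I * J31 τ η) I (S 0) (S 2) (S 3) (S 1) ∧
    CommutatorRel (I * J12 τ η) I (S 0) (S 3) (S 1) (S 2)

lemma forall_sklRel_iff_sklyaninRel {τ η : ℂ} (f : FreeAlgebra ℂ (Fin 4) →ₐ[ℂ] A) :
    (∀ ⦃x y⦄, sklRel τ η x y → f x = f y) ↔ SklyaninRel τ η fun j => f (X j) := by
  simp only [sklRel, or_imp, forall_and, and_imp, forall_eq_apply_imp_iff, forall_eq, map_sub,
    map_add, map_mul, map_smul, SklyaninRel, CommutatorRel]
  tauto

/-- The scalars `cⱼ` for which the generators `Sⱼ` correspond to the functions `z ↦ cⱼθⱼ(2z)`. -/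
def sklScalar (τ η : ℂ) : Fin 4 → ℂ := ![θ τ η, θ2 τ η, I * θ3 τ η, θ4 τ η]

variable {τ η : ℂ} (hτ : 0 < τ.im) (hη : 2 * η ∉ periodLattice τ)
include hτ

include hη in
lemma sklScalar_ne_zero (j : Fin 4) : sklScalar τ η j ≠ 0 := by
  have ne_zero := thetaFamily_ne_zero_of_two_mul_notMem hτ hη
  fin_cases j
  exacts [ne_zero 0, ne_zero 1, mul_ne_zero I_ne_zero (ne_zero 2), ne_zero 3]

include hη in
theorem sklyaninRel_smul_iff_thetaRel (x : Fin 4 → A) :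
    SklyaninRel τ η (fun j => sklScalar τ η j • x j) ↔ ThetaRel τ η x := by
  have ne_zero := sklScalar_ne_zero hτ hη
  have θ1_ne : θ τ η ≠ 0 := thetaFamily_ne_zero_of_two_mul_notMem hτ hη 0
  have θ2_ne : θ2 τ η ≠ 0 := thetaFamily_ne_zero_of_two_mul_notMem hτ hη 1
  have θ3_ne : θ3 τ η ≠ 0 := thetaFamily_ne_zero_of_two_mul_notMem hτ hη 2
  have θ4_ne : θ4 τ η ≠ 0 := thetaFamily_ne_zero_of_two_mul_notMem hτ hη 3
  rw [SklyaninRel, commutatorRel_swap (z := sklScalar τ η 1 • x 1)]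
  simp only [commutatorRel_smul (ne_zero _) (ne_zero _) (ne_zero _) (ne_zero _), ThetaRel]
  simp only [sklScalar, Matrix.cons_val, J23, J31, J12]
  refine and_congr (iff_of_eq ?_) (and_congr (iff_of_eq ?_) (iff_of_eq ?_)) <;> congr 1 <;>
    field_simp <;> simp only [I_sq, neg_neg]

lemma map_elemV_mul_sub (φ : Vsub τ →ₗ[ℂ] A) (a b c₁ c₂ : ℂ) :
    φ (elemV τ (a - η / 2) (b - η / 2) (c₁ + η / 2)) *
        φ (elemV τ (a + η / 2) (b + η / 2) (c₂ - η / 2)) -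
      φ (elemV τ (a - η / 2) (b - η / 2) (c₂ + η / 2)) *
        φ (elemV τ (a + η / 2) (b + η / 2) (c₁ - η / 2)) =
    (1 / 4 : ℂ) •
      (thetaComb τ (fun j => φ (thetaBasis hτ j)) (a + b - η) (a + c₁) (b + c₁) *
          thetaComb τ (fun j => φ (thetaBasis hτ j)) (a + b + η) (a + c₂) (b + c₂) -
        thetaComb τ (fun j => φ (thetaBasis hτ j)) (a + b - η) (a + c₂) (b + c₂) *
          thetaComb τ (fun j => φ (thetaBasis hτ j)) (a + b + η) (a + c₁) (b + c₁)) := by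
  simp only [elemV_eq_smul_thetaComb hτ, map_smul, map_thetaComb, smul_mul_smul_comm, smul_sub]
  ring_nf

include hη in
theorem forall_qRel_iff_thetaRel (f : TensorAlgebra ℂ (Vsub τ) →ₐ[ℂ] A) :
    (∀ ⦃x y⦄, qRel τ η x y → f x = f y) ↔
      ThetaRel τ η fun j => f (TensorAlgebra.ι ℂ (thetaBasis hτ j)) := by
  set φ : Vsub τ →ₗ[ℂ] A := f.toLinearMap ∘ₗ TensorAlgebra.ι ℂ
  have φ_apply (v : Vsub τ) : f (TensorAlgebra.ι ℂ v) = φ v := rfl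
  simp only [φ_apply, ← forall_thetaComb_mul_comm_iff hτ hη]
  constructor
  · intro respects s h u₁ u₂
    have relation := respects ⟨s / 2 + h, s / 2 - h, u₁ - s / 2, u₂ - s / 2, rfl, rfl⟩
    simp only [map_sub, map_mul, φ_apply, map_zero] at relation
    rw [map_elemV_mul_sub hτ, smul_eq_zero_iff_right (by norm_num), sub_eq_zero] at relation
    ring_nf at relation ⊢
    exact relation
  · rintro comm _ _ ⟨a, b, c₁, c₂, rfl, rfl⟩
    have comm_abc := comm (a + b) ((a - b) / 2) ((a + b) / 2 + c₁) ((a + b) / 2 + c₂)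
    simp only [map_sub, map_mul, φ_apply, map_zero]
    rw [map_elemV_mul_sub hτ, smul_eq_zero_iff_right (by norm_num), sub_eq_zero]
    ring_nf at comm_abc ⊢
    exact comm_abc

/-- The identification of the free algebra with `T(V)` sending `Sⱼ` to `z ↦ cⱼθⱼ(2z)`, where
`cⱼ` is `sklScalar τ η j`. -/
def freeAlgebraEquivTensorAlgebra :
    FreeAlgebra ℂ (Fin 4) ≃ₐ[ℂ] TensorAlgebra ℂ (Vsub τ) :=
  (TensorAlgebra.equivFreeAlgebra
    ((thetaBasis hτ).isUnitSMul fun j => (sklScalar_ne_zero hτ hη j).isUnit)).symm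

lemma freeAlgebraEquivTensorAlgebra_X (j : Fin 4) :
    freeAlgebraEquivTensorAlgebra hτ hη (X j) =
      sklScalar τ η j • TensorAlgebra.ι ℂ (thetaBasis hτ j) := by
  rw [freeAlgebraEquivTensorAlgebra, X, TensorAlgebra.equivFreeAlgebra_symm_ι,
    Module.Basis.isUnitSMul_apply, map_smul]

theorem forall_sklRel_iff_forall_qRel (f : TensorAlgebra ℂ (Vsub τ) →ₐ[ℂ] A) :
    (∀ ⦃x y⦄, sklRel τ η x y →
      f (freeAlgebraEquivTensorAlgebra hτ hη x) = f (freeAlgebraEquivTensorAlgebra hτ hη y)) ↔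
      ∀ ⦃x y⦄, qRel τ η x y → f x = f y := by
  rw [forall_qRel_iff_thetaRel hτ hη, ← sklyaninRel_smul_iff_thetaRel hτ hη]
  simp only [← map_smul f, ← freeAlgebraEquivTensorAlgebra_X hτ hη]
  exact forall_sklRel_iff_sklyaninRel
    (f.comp (freeAlgebraEquivTensorAlgebra hτ hη : FreeAlgebra ℂ (Fin 4) →ₐ[ℂ] _))

end Presentations

end ThetaFunctions

/-- Theorem B.4: for `2η ∉ Λ` the Sklyanin algebra `𝒮_η` and the
quotient algebra `Q_η = T(V)/[R_η]` are isomorphic as unital `ℂ`-algebras. -/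
theorem statement19 (τ : ℂ) (hτ : 0 < τ.im) (η : ℂ)
    (hη : ¬ ∃ m n : ℤ, 2 * η = (m : ℂ) + τ * n) :
    Nonempty (Sklyanin τ η ≃ₐ[ℂ] Qeta τ η) := by
  have two_η_notMem : 2 * η ∉ periodLattice τ := mem_periodLattice.not.mpr hη
  set e := freeAlgebraEquivTensorAlgebra hτ two_η_notMem
  refine ⟨ringQuotEquivOfAlgEquiv (r := sklRel τ η) (s := qRel τ η) e ?_ ?_⟩
  · rw [forall_sklRel_iff_forall_qRel hτ two_η_notMem]
    exact fun _ _ => RingQuot.mkAlgHom_rel ℂ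
  · refine (forall_sklRel_iff_forall_qRel hτ two_η_notMem
      ((RingQuot.mkAlgHom ℂ (sklRel τ η)).comp (e.symm : _ →ₐ[ℂ] _))).mp fun x y hxy => ?_
    simpa [e] using RingQuot.mkAlgHom_rel ℂ hxy
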